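/- arXiv:math/0103137 — 2 statements merged into one kernel-verified Lean document; each statement's English description precedes it below -/
import Mathlib

section
/- Let L be a free ℤ-module of finite rank with a nondegenerate symmetric bilinear form B, let M ⊆ L be a primitive submodule (i.e. L/M is torsion-free), and let f, f' ∈ M⊥ satisfy B(f,f) = 0, B(f',f') = 0, B(f,f') = 1. Define the mirror lattice M̌ = M⊥ ∩ f⊥ ∩ (f')⊥. Then f, f' ∈ M̌⊥, the orthogonal complement M̌⊥ equals the internal direct sum M ⊕ ℤf ⊕ ℤf', and M̌⊥ ∩ f⊥ ∩ (f')⊥ = M. In particular, the mirror construction M ↦ M̌ performed with the same hyperbolic pair (f, f') is an involution: applying it to M̌ recovers M. -/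
/-!
STATEMENT 1: `L` a free ℤ-module of finite rank with a nondegenerate symmetric bilinear
form `B`, `M ⊆ L` a primitive submodule, `f, f' ∈ M⊥` a hyperbolic pair. With the mirror
lattice `M̌ = M⊥ ∩ f⊥ ∩ (f')⊥` one has: `f, f' ∈ M̌⊥`; `M̌⊥` is the internal direct sum
`M ⊕ ℤf ⊕ ℤf'`; and `M̌⊥ ∩ f⊥ ∩ (f')⊥ = M`, i.e. the mirror construction is an involution.
-/

/-- The orthogonal complement of a submodule `S` with respect to `B`:
`{x : L | ∀ s ∈ S, B x s = 0}`. -/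
def sperp {L : Type*} [AddCommGroup L] (B : L →ₗ[ℤ] L →ₗ[ℤ] ℤ)
    (S : Submodule ℤ L) : Submodule ℤ L where
  carrier := {x | ∀ s ∈ S, B x s = 0}
  add_mem' := by
    intro a b ha hb s hs
    rw [map_add, LinearMap.add_apply, ha s hs, hb s hs, add_zero]
  zero_mem' := by
    intro s hs
    rw [map_zero, LinearMap.zero_apply]
  smul_mem' := by
    intro c a ha s hs
    rw [map_smul, LinearMap.smul_apply, ha s hs, smul_zero]

/-- The orthogonal complement of a single vector `v` with respect to `B`. -/
def eperp {L : Type*} [AddCommGroup L] (B : L →ₗ[ℤ] L →ₗ[ℤ] ℤ) (v : L) :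
    Submodule ℤ L :=
  LinearMap.ker (B.flip v)

/-!
The mirror of `M` is `(M ⊕ U)⊥`, where `U = ℤf ⊕ ℤf'` is the hyperbolic plane. Since `U` is
unimodular, it splits off: subtracting from `x` its `U`-component sends `M ⊕ U` onto `M`, and hence
`M ⊕ U` inherits primitivity from `M`. The theorem thus reduces to `N⊥⊥ = N` for a finitely
generated primitive `N`. If `x ∉ N`, some functional on `N + ℤx` vanishes on `N` but not at `x`. By
a rank count a nonzero multiple of it is the restriction of `B y` for some `y`, so that `y ∈ N⊥` but
`B y x ≠ 0`.
-/

namespace MirrorLattice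

section PrimitiveSubmodule

variable {R L N : Type*} [CommRing R] [AddCommGroup L] [Module R L] [AddCommGroup N] [Module R N]

/-- A submodule is primitive if it contains every vector that has a nonzero multiple in it; over a
domain this says that the quotient is torsion-free. -/
def IsPrimitive (M : Submodule R L) : Prop :=
  ∀ (r : R) (x : L), r ≠ 0 → r • x ∈ M → x ∈ M

theorem IsPrimitive.comap {M : Submodule R L} (hM : IsPrimitive M) (φ : N →ₗ[R] L) :
    IsPrimitive (M.comap φ) := fun r x hr hx ↦
  hM r (φ x) hr (by simpa only [Submodule.mem_comap, map_smul] using hx)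

theorem IsPrimitive.isTorsionFree_quotient [IsDomain R] {M : Submodule R L} (hM : IsPrimitive M) :
    Module.IsTorsionFree R (L ⧸ M) := by
  refine .of_smul_eq_zero fun r q hrq ↦ or_iff_not_imp_left.2 fun hr ↦ ?_
  obtain ⟨x, rfl⟩ := Submodule.Quotient.mk_surjective M q
  rw [← Submodule.Quotient.mk_smul, Submodule.Quotient.mk_eq_zero] at hrq
  exact (Submodule.Quotient.mk_eq_zero M).2 (hM r x hr hrq)

theorem IsPrimitive.exists_dual_apply_ne_zero [IsDomain R] [IsPrincipalIdealRing R]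
    [Module.Finite R L] {M : Submodule R L} (hM : IsPrimitive M) {x : L} (hx : x ∉ M) :
    ∃ φ : Module.Dual R L, M ≤ LinearMap.ker φ ∧ φ x ≠ 0 := by
  have := hM.isTorsionFree_quotient
  obtain ⟨ψ, hψ⟩ : ∃ ψ : Module.Dual R (L ⧸ M), ψ (M.mkQ x) ≠ 0 := by
    have hx' : M.mkQ x ≠ 0 := (Submodule.Quotient.mk_eq_zero M).not.2 hx
    simpa only [ne_eq, not_forall] using (Module.forall_dual_apply_eq_zero_iff R _).not.2 hx'
  exact ⟨ψ ∘ₗ M.mkQ, by simpa using LinearMap.ker_le_ker_comp M.mkQ ψ, hψ⟩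

end PrimitiveSubmodule

section RankCount

variable {R L N : Type*} [CommRing R] [IsDomain R] [IsPrincipalIdealRing R]
  [AddCommGroup L] [Module R L] [AddCommGroup N] [Module R N] [Module.Finite R N]

theorem isTorsion_dual_quotient_of_dualCoannihilator_eq_bot {Λ : Submodule R (Module.Dual R N)}
    (hΛ : Λ.dualCoannihilator = ⊥) : Module.IsTorsion R (Module.Dual R N ⧸ Λ) := by
  let eval : N →ₗ[R] Module.Dual R Λ := Λ.subtype.flip
  have eval_injective : Function.Injective eval := by
    refine (injective_iff_map_eq_zero eval).2 fun n hn ↦ ?_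
    rw [← Submodule.mem_bot R, ← hΛ, Submodule.mem_dualCoannihilator]
    exact fun φ hφ ↦ LinearMap.congr_fun hn ⟨φ, hφ⟩
  have : Module.IsTorsionFree R N := eval_injective.moduleIsTorsionFree eval (map_smul eval)
  have finrank_le : Module.finrank R N ≤ Module.finrank R Λ := by
    have : Module.Free R Λ := Module.free_of_finite_type_torsion_free' (M := Λ)
    calc
      Module.finrank R N ≤ Module.finrank R (Module.Dual R Λ) :=
        LinearMap.finrank_le_finrank_of_injective eval_injective
      _ = Module.finrank R Λ := Module.finrank_linearMap_self R R Λ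
  have finrank_quotient_add : Module.finrank R (Module.Dual R N ⧸ Λ) + Module.finrank R Λ =
      Module.finrank R N :=
    Λ.finrank_quotient_add_finrank.trans (Module.finrank_linearMap_self R R N)
  exact Module.finrank_eq_zero_iff_isTorsion.1 (by lia)

theorem exists_apply_eq_smul_of_separatingRight {B : L →ₗ[R] N →ₗ[R] R} (hB : B.SeparatingRight)
    (φ : Module.Dual R N) : ∃ r : R, r ≠ 0 ∧ ∃ y : L, B y = r • φ := by
  have hΛ : (LinearMap.range B).dualCoannihilator = ⊥ := by
    refine (Submodule.eq_bot_iff _).2 fun n hn ↦ hB n fun y ↦ ?_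
    exact (Submodule.mem_dualCoannihilator n).1 hn (B y) ⟨y, rfl⟩
  obtain ⟨r, hr⟩ := isTorsion_dual_quotient_of_dualCoannihilator_eq_bot hΛ
    (x := Submodule.Quotient.mk φ)
  exact ⟨r, nonZeroDivisors.coe_ne_zero r, (Submodule.Quotient.mk_eq_zero _).1 hr⟩

end RankCount

variable {L : Type*} [AddCommGroup L] {B : L →ₗ[ℤ] L →ₗ[ℤ] ℤ} {M : Submodule ℤ L} {f f' : L}

section OrthogonalComplement

theorem mem_eperp {x v : L} : x ∈ eperp B v ↔ B x v = 0 :=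
  Iff.rfl

theorem le_eperp_of_mem_sperp (hB : B.IsSymm) {v : L} (hv : v ∈ sperp B M) : M ≤ eperp B v :=
  fun m hm ↦ hB.eq_iff.1 (hv m hm)

theorem le_sperp_sperp (hB : B.IsSymm) : M ≤ sperp B (sperp B M) :=
  fun m hm _ hy ↦ hB.eq_iff.1 (hy m hm)

theorem sperp_sup (P Q : Submodule ℤ L) : sperp B (P ⊔ Q) = sperp B P ⊓ sperp B Q := by
  ext x
  exact sup_le_iff (a := P) (b := Q) (c := LinearMap.ker (B x))

theorem sperp_span_pair (v w : L) :
    sperp B (Submodule.span ℤ {v, w}) = eperp B v ⊓ eperp B w := by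
  ext x
  have span_le_ker := Submodule.span_le (R := ℤ) (s := {v, w}) (p := LinearMap.ker (B x))
  exact span_le_ker.trans Set.pair_subset_iff

theorem IsPrimitive.sperp_sperp (hM : IsPrimitive M) (hfg : M.FG) (hB : B.IsSymm)
    (hnd : B.SeparatingLeft) : sperp B (sperp B M) = M := by
  refine le_antisymm (fun x hx ↦ ?_) (le_sperp_sperp hB)
  by_contra hxM
  let N := M ⊔ Submodule.span ℤ {x}
  have hxN : x ∈ N := Submodule.mem_sup_right (Submodule.mem_span_singleton_self x)
  have : Module.Finite ℤ N := .of_fg (hfg.sup (Submodule.fg_span_singleton x))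
  obtain ⟨φ, hφM, hφx⟩ :=
    (hM.comap N.subtype).exists_dual_apply_ne_zero (x := ⟨x, hxN⟩) hxM
  have separatingRight : (B.domRestrict₂ N).SeparatingRight := fun n hn ↦
    Subtype.ext (hnd n fun y ↦ hB.eq_iff.1 (hn y))
  obtain ⟨r, hr, y, hy⟩ := exists_apply_eq_smul_of_separatingRight separatingRight φ
  have apply_y (z : N) : B y z = r * φ z := LinearMap.congr_fun hy z
  have hyM : y ∈ sperp B M := fun m hm ↦ by
    rw [apply_y ⟨m, Submodule.mem_sup_left hm⟩, hφM hm, mul_zero]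
  have hyx : B y x ≠ 0 := by
    rw [apply_y ⟨x, hxN⟩]
    exact mul_ne_zero hr hφx
  exact hyx (hB.eq_iff.1 (hx y hyM))

end OrthogonalComplement

section HyperbolicPair

/-- A hyperbolic pair: two isotropic vectors with pairing `1`. -/
structure IsHyperbolicPair (B : L →ₗ[ℤ] L →ₗ[ℤ] ℤ) (f f' : L) : Prop where
  left_isotropic : B f f = 0
  right_isotropic : B f' f' = 0
  pairing : B f f' = 1

/-- The component of a vector in the hyperbolic plane `ℤf ⊕ ℤf'`. It is the orthogonal projection
onto that plane when `(f, f')` is a hyperbolic pair for a symmetric form. -/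
def hyperbolicPart (B : L →ₗ[ℤ] L →ₗ[ℤ] ℤ) (f f' : L) : L →ₗ[ℤ] L :=
  (B.flip f').smulRight f + (B.flip f).smulRight f'

theorem hyperbolicPart_apply (x : L) : hyperbolicPart B f f' x = B x f' • f + B x f • f' :=
  rfl

theorem hyperbolicPart_mem_span (x : L) : hyperbolicPart B f f' x ∈ Submodule.span ℤ {f, f'} :=
  Submodule.mem_span_pair.2 ⟨B x f', B x f, rfl⟩

theorem hyperbolicPart_eq_zero {x : L} (hx : x ∈ eperp B f ⊓ eperp B f') :
    hyperbolicPart B f f' x = 0 := by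
  rw [hyperbolicPart_apply, mem_eperp.1 hx.1, mem_eperp.1 hx.2, zero_smul, zero_smul, add_zero]

namespace IsHyperbolicPair

theorem apply_smul_add_smul_left (h : IsHyperbolicPair B f f') (hB : B.IsSymm) (a b : ℤ) :
    B (a • f + b • f') f = b := by
  have pairing' : B f' f = 1 := (hB.eq f f').symm.trans h.pairing
  simp [h.left_isotropic, pairing']

theorem apply_smul_add_smul_right (h : IsHyperbolicPair B f f') (a b : ℤ) :
    B (a • f + b • f') f' = a := by
  simp [h.right_isotropic, h.pairing]

theorem linearIndependent (h : IsHyperbolicPair B f f') (hB : B.IsSymm) :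
    LinearIndependent ℤ ![f, f'] := by
  refine LinearIndependent.pair_iff.2 fun a b hab ↦ ⟨?_, ?_⟩
  · rw [← h.apply_smul_add_smul_right a b, hab, map_zero, LinearMap.zero_apply]
  · rw [← h.apply_smul_add_smul_left hB a b, hab, map_zero, LinearMap.zero_apply]

theorem hyperbolicPart_of_mem_span (h : IsHyperbolicPair B f f') (hB : B.IsSymm) {u : L}
    (hu : u ∈ Submodule.span ℤ {f, f'}) : hyperbolicPart B f f' u = u := by
  obtain ⟨a, b, rfl⟩ := Submodule.mem_span_pair.1 hu
  rw [hyperbolicPart_apply, h.apply_smul_add_smul_left hB, h.apply_smul_add_smul_right]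

theorem disjoint_span (h : IsHyperbolicPair B f f') (hB : B.IsSymm)
    (hM : M ≤ eperp B f ⊓ eperp B f') : Disjoint M (Submodule.span ℤ {f, f'}) :=
  Submodule.disjoint_def.2 fun _ hxM hxU ↦
    (h.hyperbolicPart_of_mem_span hB hxU).symm.trans (hyperbolicPart_eq_zero (hM hxM))

theorem mem_sup_span_iff (h : IsHyperbolicPair B f f') (hB : B.IsSymm)
    (hM : M ≤ eperp B f ⊓ eperp B f') {x : L} :
    x ∈ M ⊔ Submodule.span ℤ {f, f'} ↔ x - hyperbolicPart B f f' x ∈ M := by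
  refine ⟨fun hx ↦ ?_, fun hx ↦ ?_⟩
  · obtain ⟨m, hm, u, hu, rfl⟩ := Submodule.mem_sup.1 hx
    rwa [map_add, hyperbolicPart_eq_zero (hM hm), h.hyperbolicPart_of_mem_span hB hu, zero_add,
      add_sub_cancel_right]
  · exact Submodule.mem_sup.2
      ⟨_, hx, hyperbolicPart B f f' x, hyperbolicPart_mem_span x, sub_add_cancel _ _⟩

theorem isPrimitive_sup_span (h : IsHyperbolicPair B f f') (hB : B.IsSymm)
    (hM : M ≤ eperp B f ⊓ eperp B f') (hprim : IsPrimitive M) :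
    IsPrimitive (M ⊔ Submodule.span ℤ {f, f'}) := by
  intro n x hn hnx
  rw [h.mem_sup_span_iff hB hM, map_smul, ← smul_sub] at hnx
  exact (h.mem_sup_span_iff hB hM).2 (hprim n _ hn hnx)

theorem sup_span_inf_eperp (h : IsHyperbolicPair B f f') (hB : B.IsSymm)
    (hM : M ≤ eperp B f ⊓ eperp B f') :
    (M ⊔ Submodule.span ℤ {f, f'}) ⊓ (eperp B f ⊓ eperp B f') = M := by
  refine le_antisymm (fun x hx ↦ ?_) (le_inf le_sup_left hM)
  simpa only [hyperbolicPart_eq_zero hx.2, sub_zero] using (h.mem_sup_span_iff hB hM).1 hx.1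

end IsHyperbolicPair

end HyperbolicPair

section Mirror

/-- The mirror lattice `M̌ = M⊥ ∩ f⊥ ∩ (f')⊥` of `M` with respect to the pair `(f, f')`. -/
def mirror (B : L →ₗ[ℤ] L →ₗ[ℤ] ℤ) (f f' : L) (M : Submodule ℤ L) : Submodule ℤ L :=
  sperp B M ⊓ eperp B f ⊓ eperp B f'

theorem mirror_eq_sperp_sup_span (B : L →ₗ[ℤ] L →ₗ[ℤ] ℤ) (f f' : L) (M : Submodule ℤ L) :
    mirror B f f' M = sperp B (M ⊔ Submodule.span ℤ {f, f'}) := by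
  rw [mirror, sperp_sup, sperp_span_pair, inf_assoc]

theorem sperp_mirror (hB : B.IsSymm) (hnd : B.SeparatingLeft) (hprim : IsPrimitive M)
    (hfg : M.FG) (h : IsHyperbolicPair B f f') (hM : M ≤ eperp B f ⊓ eperp B f') :
    sperp B (mirror B f f' M) = M ⊔ Submodule.span ℤ {f, f'} := by
  have sup_fg := hfg.sup (Submodule.fg_span (Set.toFinite {f, f'}))
  rw [mirror_eq_sperp_sup_span, (h.isPrimitive_sup_span hB hM hprim).sperp_sperp sup_fg hB hnd]

end Mirror

end MirrorLattice

open MirrorLattice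

theorem mirror_lattice_involution_general {L : Type*} [AddCommGroup L]
    {B : L →ₗ[ℤ] L →ₗ[ℤ] ℤ} (hB : B.IsSymm) (hnd : B.SeparatingLeft)
    {M : Submodule ℤ L} (hprim : IsPrimitive M) (hfg : M.FG)
    {f f' : L} (hfM : f ∈ sperp B M) (hf'M : f' ∈ sperp B M) (h : IsHyperbolicPair B f f') :
    (f ∈ sperp B (mirror B f f' M) ∧ f' ∈ sperp B (mirror B f f' M)) ∧
    sperp B (mirror B f f' M) = M ⊔ Submodule.span ℤ {f, f'} ∧
    (Disjoint M (Submodule.span ℤ {f, f'}) ∧ LinearIndependent ℤ ![f, f']) ∧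
    mirror B f f' (mirror B f f' M) = M := by
  have hM : M ≤ eperp B f ⊓ eperp B f' :=
    le_inf (le_eperp_of_mem_sperp hB hfM) (le_eperp_of_mem_sperp hB hf'M)
  have sperp_mirror_eq := sperp_mirror hB hnd hprim hfg h hM
  have span_le : Submodule.span ℤ {f, f'} ≤ sperp B (mirror B f f' M) :=
    sperp_mirror_eq ▸ le_sup_right
  refine ⟨Set.pair_subset_iff.1 (Submodule.span_le.1 span_le), sperp_mirror_eq,
    ⟨h.disjoint_span hB hM, h.linearIndependent hB⟩, ?_⟩
  rw [mirror, sperp_mirror_eq, inf_assoc, h.sup_span_inf_eperp hB hM]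

theorem mirror_lattice_involution
    (L : Type*) [AddCommGroup L] [Module.Free ℤ L] [Module.Finite ℤ L]
    (B : L →ₗ[ℤ] L →ₗ[ℤ] ℤ) (hsym : ∀ x y : L, B x y = B y x)
    (hnd : ∀ x : L, (∀ y : L, B x y = 0) → x = 0)
    (M : Submodule ℤ L)
    (hprim : ∀ (n : ℤ) (x : L), n ≠ 0 → n • x ∈ M → x ∈ M)
    (f f' : L) (hfM : f ∈ sperp B M) (hf'M : f' ∈ sperp B M)
    (hff : B f f = 0) (hf'f' : B f' f' = 0) (hff' : B f f' = 1) :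
    (f ∈ sperp B (sperp B M ⊓ eperp B f ⊓ eperp B f') ∧
     f' ∈ sperp B (sperp B M ⊓ eperp B f ⊓ eperp B f')) ∧
    (sperp B (sperp B M ⊓ eperp B f ⊓ eperp B f')
        = M ⊔ Submodule.span ℤ ({f, f'} : Set L)) ∧
    (Disjoint M (Submodule.span ℤ ({f, f'} : Set L)) ∧
      LinearIndependent ℤ ![f, f']) ∧
    (sperp B (sperp B M ⊓ eperp B f ⊓ eperp B f') ⊓ eperp B f ⊓ eperp B f' = M) :=
  mirror_lattice_involution_general ⟨hsym⟩ hnd hprim (IsNoetherian.noetherian M) hfM hf'M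
    ⟨hff, hf'f', hff'⟩
end

section
/- Let Δ ⊆ ℝ^{2+n} be a countable set of vectors with B(δ,δ) < 0 for every δ ∈ Δ. Then the set Ω \ ⋃_{δ∈Δ} {z ∈ ℂ^{2+n} : B_ℂ(z, δ) = 0}, obtained from the period domain cone by removing the hyperplanes orthogonal to the vectors of Δ, has exactly two connected components. (Applied to the set Δ(M⊥) of (−2)-vectors of M⊥, this is the statement that the period domain D_M of marked ample M-polarized K3 surfaces has two connected components.) -/
/-- The symmetric bilinear form of signature `(2, n)` on `ℝ^(2+n)`:
`B x y = x₀y₀ + x₁y₁ - ∑ᵢ x_{i+2} y_{i+2}`. -/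
def BR (n : ℕ) (x y : Fin (n + 2) → ℝ) : ℝ :=
  x 0 * y 0 + x 1 * y 1 - ∑ i : Fin n, x i.succ.succ * y i.succ.succ

/-- The ℂ-bilinear extension of `BR` to `ℂ^(2+n)`. -/
noncomputable def BC (n : ℕ) (x y : Fin (n + 2) → ℂ) : ℂ :=
  x 0 * y 0 + x 1 * y 1 - ∑ i : Fin n, x i.succ.succ * y i.succ.succ

/-- Coordinatewise complex conjugation on `ℂ^(2+n)`. -/
noncomputable def conjVec {n : ℕ} (z : Fin (n + 2) → ℂ) : Fin (n + 2) → ℂ :=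
  fun i => (starRingEnd ℂ) (z i)

/-- The period domain cone `Ω = {z : B_ℂ(z,z) = 0, B_ℂ(z,z̄) > 0}`; since
`B_ℂ(z, z̄)` is always real, the positivity is stated for its real part. -/
def Omega (n : ℕ) : Set (Fin (n + 2) → ℂ) :=
  {z | BC n z z = 0 ∧ 0 < (BC n z (conjVec z)).re}

/-!
For `n ≥ 1` the isotropic vectors `z` with `z 0 - z 2 = 1` are parametrised by a complex
Lorentzian space of dimension `n`, and every vector of `Ω` is a nonzero multiple of such a vector.
In this chart `Ω` becomes `ℂˣ × (T ∪ -T)`, where the tube domain `T` consists of the vectors whose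
imaginary part lies in the open forward light cone, and is therefore convex. A hyperplane becomes
the zero set of a nonzero polynomial of degree at most two. Two points of a convex open set lie on
a common complex line. If they avoid the removed zero sets, the line meets these in a countable set
only, and a convex open subset of the plane stays path connected without countably many points.
Hence `T` and `-T` contribute one connected component each.
-/

open Set Topology
open scoped Convex

section ConnectedComponents

variable {X : Type*} [TopologicalSpace X]

theorem card_connectedComponents_eq_two_of_isClopen {s : Set X} (hs : IsClopen s)
    (hs₁ : IsConnected s) (hs₂ : IsConnected sᶜ) : Nat.card (ConnectedComponents X) = 2 := by
  obtain ⟨a, ha⟩ := hs₁.nonempty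
  obtain ⟨b, hb⟩ := hs₂.nonempty
  refine Nat.card_eq_two_iff.2 ⟨a, b, fun hab ↦ ?_, eq_univ_of_forall fun c ↦ ?_⟩
  · exact hb (hs.connectedComponent_subset ha (ConnectedComponents.coe_eq_coe'.1 hab.symm))
  · obtain ⟨x, rfl⟩ := ConnectedComponents.surjective_coe c
    exact (em (x ∈ s)).imp
      (fun hx ↦ ConnectedComponents.coe_eq_coe'.2
        (hs₁.isPreconnected.subset_connectedComponent ha hx))
      (fun hx ↦ ConnectedComponents.coe_eq_coe'.2
        (hs₂.isPreconnected.subset_connectedComponent hb hx))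

theorem card_connectedComponents_union_eq_two {s t : Set X} (hs : IsConnected s)
    (ht : IsConnected t) (hst : SeparatedNhds s t) :
    Nat.card (ConnectedComponents ↥(s ∪ t)) = 2 := by
  have compl_eq : ((↑) ⁻¹' s : Set ↥(s ∪ t))ᶜ = (↑) ⁻¹' t := by
    ext ⟨x, hx⟩
    exact ⟨hx.resolve_left, fun hxt hxs ↦ hst.disjoint.notMem_of_mem_left hxs hxt⟩
  have isConnected_preimage {r : Set X} (hr : IsConnected r) (hrst : r ⊆ s ∪ t) :
      IsConnected ((↑) ⁻¹' r : Set ↥(s ∪ t)) := by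
    have image_preimage : Subtype.val '' ((↑) ⁻¹' r : Set ↥(s ∪ t)) = r := by
      rw [Subtype.image_preimage_coe, inter_eq_self_of_subset_right hrst]
    rw [← image_preimage] at hr
    exact ⟨hr.nonempty.of_image, IsInducing.subtypeVal.isPreconnected_image.1 hr.isPreconnected⟩
  have isOpen_preimage {r r' : Set X} (hrr' : r ∪ r' = s ∪ t) (h : SeparatedNhds r r') :
      IsOpen ((↑) ⁻¹' r : Set ↥(s ∪ t)) := by
    obtain ⟨U, V, hU, -, hrU, hrV, hUV⟩ := h
    refine isOpen_induced_iff.2 ⟨U, hU, ?_⟩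
    ext ⟨x, hx⟩
    rw [← hrr'] at hx
    exact ⟨fun hxU ↦ hx.resolve_right fun hxr ↦ hUV.notMem_of_mem_left hxU (hrV hxr), @hrU x⟩
  refine card_connectedComponents_eq_two_of_isClopen (s := (↑) ⁻¹' s) ⟨⟨?_⟩, ?_⟩ ?_ ?_
  · rw [compl_eq]
    exact isOpen_preimage (union_comm t s) hst.symm
  · exact isOpen_preimage rfl hst
  · exact isConnected_preimage hs subset_union_left
  · rw [compl_eq]
    exact isConnected_preimage ht subset_union_right

end ConnectedComponents

section Countable

variable {E : Type*} [AddCommGroup E] [Module ℝ E]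

theorem countable_setOf_segment_inter_nonempty {a c y : E}
    (hy : LinearIndependent ℝ ![a - c, y]) {s : Set E} (hs : s.Countable) (ha : a ∉ s) :
    {t : ℝ | ([a -[ℝ] c + t • y] ∩ s).Nonempty}.Countable := by
  refine countable_ofPred_nonempty_of_disjoint (fun t t' htt' ↦ ?_) (fun t ↦ inter_subset_right) hs
  have inter_eq := segment_inter_eq_endpoint_of_linearIndependent_of_ne hy htt'.symm c
  rw [add_sub_cancel] at inter_eq
  rwa [Function.onFun, disjoint_iff_inter_eq_empty, ← inter_inter_distrib_right, inter_eq,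
    singleton_inter_eq_empty]

variable [TopologicalSpace E] [ContinuousAdd E] [ContinuousSMul ℝ E]

theorem isPathConnected_sdiff_of_convex_of_countable (hE : 1 < Module.rank ℝ E) {U s : Set E}
    (hU : Convex ℝ U) (hUo : IsOpen U) (hUne : U.Nonempty) (hs : s.Countable) :
    IsPathConnected (U \ s) := by
  have : Nontrivial E := rank_pos_iff_nontrivial.1 (zero_lt_one.trans hE)
  refine isPathConnected_iff.2 ⟨(hs.dense_compl ℝ).inter_open_nonempty U hUo hUne, ?_⟩
  rintro a ⟨haU, has⟩ b ⟨hbU, hbs⟩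
  obtain rfl | hab := eq_or_ne a b
  · exact JoinedIn.refl ⟨haU, has⟩
  set c := midpoint ℝ a b
  have hbc : b - c = -(a - c) := by
    rw [left_sub_midpoint, right_sub_midpoint, ← smul_neg, neg_sub]
  have hac : a - c ≠ 0 := by
    rw [left_sub_midpoint]
    exact smul_ne_zero (by norm_num) (sub_ne_zero.2 hab)
  obtain ⟨y, hy⟩ := exists_linearIndependent_pair_of_one_lt_rank hE hac
  have hy' : LinearIndependent ℝ ![b - c, y] := by
    rwa [hbc, LinearIndependent.pair_neg_left_iff]
  have countable_bad := (countable_setOf_segment_inter_nonempty hy hs has).union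
    (countable_setOf_segment_inter_nonempty hy' hs hbs)
  have isOpen_good : IsOpen {t : ℝ | c + t • y ∈ U} := hUo.preimage (by fun_prop)
  have zero_good : c + (0 : ℝ) • y ∈ U := by
    simpa using hU.midpoint_mem haU hbU
  obtain ⟨t, htU, ht⟩ := (countable_bad.dense_compl ℝ).inter_open_nonempty _ isOpen_good
    ⟨0, zero_good⟩
  have joined {d : E} (hd : d ∈ U) (hds : ¬([d -[ℝ] c + t • y] ∩ s).Nonempty) :
      JoinedIn (U \ s) d (c + t • y) :=
    JoinedIn.of_segment_subset fun x hx ↦ ⟨hU.segment_subset hd htU hx, fun hxs ↦ hds ⟨x, hx, hxs⟩⟩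
  exact (joined haU fun h ↦ ht (.inl h)).trans (joined hbU fun h ↦ ht (.inr h)).symm

end Countable

section Analytic

theorem dense_setOf_ne_zero_of_analyticOnNhd {𝕜 E F : Type*} [NontriviallyNormedField 𝕜]
    [NormedAddCommGroup E] [NormedSpace 𝕜 E] [PreconnectedSpace E] [NormedAddCommGroup F]
    [NormedSpace 𝕜 F] {f : E → F} (hf : AnalyticOnNhd 𝕜 f univ) (hf₀ : ∃ z, f z ≠ 0) :
    Dense {z | f z ≠ 0} := by
  refine interior_eq_empty_iff_dense_compl.1 (eq_empty_of_forall_notMem fun x hx ↦ ?_)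
  obtain ⟨z, hz⟩ := hf₀
  exact hz (hf.eqOn_zero_of_preconnected_of_eventuallyEq_zero isPreconnected_univ (mem_univ x)
    (mem_interior_iff_mem_nhds.1 hx) (mem_univ z))

theorem countable_setOf_eq_zero_of_analyticOnNhd {𝕜 F : Type*} [NontriviallyNormedField 𝕜]
    [ConnectedSpace 𝕜] [SecondCountableTopology 𝕜] [NormedAddCommGroup F] [NormedSpace 𝕜 F]
    {f : 𝕜 → F} (hf : AnalyticOnNhd 𝕜 f univ) (hf₀ : ∃ z, f z ≠ 0) :
    {z | f z = 0}.Countable := by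
  obtain ⟨z, hz⟩ := hf₀
  have hzeros : {z | f z = 0}ᶜ ∈ Filter.codiscrete 𝕜 := hf.preimage_zero_mem_codiscrete hz
  refine IsLindelof.countable_of_isDiscrete (HereditarilyLindelofSpace.isLindelof _) ?_
  simpa using isDiscrete_of_codiscreteWithin hzeros

variable {E F ι : Type*} [NormedAddCommGroup E] [NormedSpace ℂ E] [CompleteSpace E]
  [NormedAddCommGroup F] [NormedSpace ℂ F]

theorem isPathConnected_sdiff_biUnion_setOf_eq_zero {U : Set E} (hU : Convex ℝ U) (hUo : IsOpen U)
    (hUne : U.Nonempty) {I : Set ι} (hI : I.Countable) {f : ι → E → F}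
    (hf : ∀ i ∈ I, AnalyticOnNhd ℂ (f i) univ) (hf₀ : ∀ i ∈ I, ∃ z, f i z ≠ 0) :
    IsPathConnected (U \ ⋃ i ∈ I, {z | f i z = 0}) := by
  have dense_compl : Dense (⋃ i ∈ I, {z | f i z = 0})ᶜ := by
    rw [compl_iUnion₂]
    exact dense_biInter_of_isOpen
      (fun i hi ↦ isOpen_ne_fun (continuousOn_univ.1 (hf i hi).continuousOn) continuous_const) hI
      fun i hi ↦ dense_setOf_ne_zero_of_analyticOnNhd (hf i hi) (hf₀ i hi)
  refine isPathConnected_iff.2 ⟨dense_compl.inter_open_nonempty U hUo hUne, ?_⟩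
  rintro x ⟨hxU, hx⟩ y ⟨hyU, hy⟩
  let line (t : ℂ) : E := x + t • (y - x)
  have line_zero : line 0 = x := by simp [line]
  have line_one : line 1 = y := by simp [line]
  have line_analytic : AnalyticOnNhd ℂ line univ := fun t _ ↦ by fun_prop
  have line_cont : Continuous line := by fun_prop
  have convex_preimage : Convex ℝ (line ⁻¹' U) :=
    (hU.translate_preimage_right x).linear_preimage
      ((LinearMap.toSpanSingleton ℂ E (y - x)).restrictScalars ℝ)
  have countable_preimage : (line ⁻¹' ⋃ i ∈ I, {z | f i z = 0}).Countable := by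
    rw [preimage_iUnion₂]
    refine hI.biUnion fun i hi ↦ countable_setOf_eq_zero_of_analyticOnNhd
      ((hf i hi).comp line_analytic (mapsTo_univ _ _)) ⟨0, fun hi₀ ↦ hx ?_⟩
    rw [line_zero] at hi₀
    exact mem_biUnion hi hi₀
  have joined : JoinedIn (line ⁻¹' (U \ ⋃ i ∈ I, {z | f i z = 0})) 0 1 :=
    (isPathConnected_sdiff_of_convex_of_countable (by simp) convex_preimage
      (hUo.preimage line_cont) ⟨0, by rwa [mem_preimage, line_zero]⟩ countable_preimage).joinedIn
      0 (by rw [← preimage_sdiff, mem_preimage, line_zero]; exact ⟨hxU, hx⟩)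
      1 (by rw [← preimage_sdiff, mem_preimage, line_one]; exact ⟨hyU, hy⟩)
  rw [← line_zero, ← line_one]
  exact (joined.map line_cont).mono (image_preimage_subset _ _)

end Analytic

section BilinearForm

variable {n m : ℕ}

theorem ofReal_ne_zero_of_BR_self_neg {δ : Fin (n + 2) → ℝ} (hδ : BR n δ δ < 0) :
    (fun i ↦ (δ i : ℂ)) ≠ 0 := by
  intro hδ₀
  have δ_apply (i) : δ i = 0 := Complex.ofReal_eq_zero.1 (congrFun hδ₀ i)
  exact hδ.ne (by simp [BR, δ_apply])

theorem BC_succ (x y : Fin (m + 1 + 2) → ℂ) :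
    BC (m + 1) x y = x 0 * y 0 + x 1 * y 1 - x 2 * y 2
      - ∑ j : Fin m, x j.succ.succ.succ * y j.succ.succ.succ := by
  rw [BC, Fin.sum_univ_succ, sub_add_eq_sub_sub]
  rfl

theorem BC_smul_left (a : ℂ) (x y : Fin (n + 2) → ℂ) : BC n (a • x) y = a * BC n x y := by
  simp only [BC, Pi.smul_apply, smul_eq_mul, mul_sub, mul_add, Finset.mul_sum, mul_assoc]

theorem BC_smul_right (a : ℂ) (x y : Fin (n + 2) → ℂ) : BC n x (a • y) = a * BC n x y := by
  simp only [BC, Pi.smul_apply, smul_eq_mul, mul_sub, mul_add, Finset.mul_sum, mul_left_comm]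

theorem conjVec_smul (a : ℂ) (z : Fin (n + 2) → ℂ) :
    conjVec (a • z) = starRingEnd ℂ a • conjVec z := by
  ext i
  simp [conjVec]

theorem smul_mem_Omega_iff {a : ℂ} (ha : a ≠ 0) {z : Fin (n + 2) → ℂ} :
    a • z ∈ Omega n ↔ z ∈ Omega n := by
  simp only [Omega, mem_ofPred_eq, conjVec_smul, BC_smul_left, BC_smul_right, ← mul_assoc,
    ← Complex.normSq_eq_conj_mul_self, Complex.re_ofReal_mul, mul_eq_zero, ha, false_or,
    mul_pos_iff_of_pos_left (Complex.normSq_pos.2 ha)]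

theorem sub_ne_zero_of_mem_Omega {z : Fin (m + 1 + 2) → ℂ} (hz : z ∈ Omega (m + 1)) :
    z 0 - z 2 ≠ 0 := by
  intro hz₀₂
  obtain ⟨hzz, hpos⟩ := hz
  simp only [BC_succ, conjVec, sub_eq_zero.1 hz₀₂] at hzz hpos
  have hz₁ : z 1 * z 1 = ∑ j : Fin m, z j.succ.succ.succ * z j.succ.succ.succ := by
    linear_combination hzz
  have norm_le : ‖z 1‖ ^ 2 ≤ ∑ j : Fin m, ‖z j.succ.succ.succ‖ ^ 2 := by
    have := norm_sum_le Finset.univ fun j : Fin m ↦ z j.succ.succ.succ * z j.succ.succ.succ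
    rw [← hz₁] at this
    simpa only [← sq, norm_pow] using this
  have norm_lt : ∑ j : Fin m, ‖z j.succ.succ.succ‖ ^ 2 < ‖z 1‖ ^ 2 := by
    simpa [Complex.mul_conj, ← Complex.ofReal_sum, Complex.normSq_eq_norm_sq,
      -Complex.ofReal_pow] using hpos
  exact norm_lt.not_ge norm_le

end BilinearForm

section Tube

variable {m : ℕ}

/-- The complexification of the quadratic form of signature `(1, m)` on `ℝ ^ (1 + m)`, in which
the tube domain lives; the positive coordinate is the first component of the pair. -/
noncomputable def lorentzForm (w : ℂ × (Fin m → ℂ)) : ℂ :=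
  w.1 ^ 2 - ∑ j, w.2 j ^ 2

/-- The isotropic vector `z` with `z 0 - z 2 = 1` whose remaining coordinates are those of `w`:
the affine chart of the quadric `B_ℂ(z, z) = 0` that realises `Ω` as a tube domain. -/
noncomputable def tubeLift (w : ℂ × (Fin m → ℂ)) : Fin (m + 1 + 2) → ℂ :=
  Matrix.vecCons ((1 - lorentzForm w) / 2) <| Matrix.vecCons w.1 <|
    Matrix.vecCons (-((1 + lorentzForm w) / 2)) w.2

/-- The tube domain: the vectors of `ℂ ^ (1 + m)` whose imaginary part lies in the open forward
light cone. The `WithLp.toLp 2` gives the spacelike part its Euclidean norm. -/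
def tubeDomain (m : ℕ) : Set (ℂ × (Fin m → ℂ)) :=
  {w | ‖WithLp.toLp 2 fun j ↦ (w.2 j).im‖ < w.1.im}

/-- The cone without apex over the image of `V` under `tubeLift`, which carries subsets of the
tube chart back to subsets of `Ω` stable under nonzero scalars. -/
def tubeCone (V : Set (ℂ × (Fin m → ℂ))) : Set (Fin (m + 1 + 2) → ℂ) :=
  image2 (fun (a : ℂ) w ↦ a • tubeLift w) {0}ᶜ V

theorem convex_tubeDomain : Convex ℝ (tubeDomain m) := by
  let imPart : ℂ × (Fin m → ℂ) →ₗ[ℝ] EuclideanSpace ℝ (Fin m) × ℝ :=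
    { toFun w := (WithLp.toLp 2 fun j ↦ (w.2 j).im, w.1.im)
      map_add' _ _ := by ext <;> simp
      map_smul' _ _ := by ext <;> simp }
  have convex_lightCone : Convex ℝ {y : EuclideanSpace ℝ (Fin m) × ℝ | ‖y.1‖ < y.2} := by
    simpa using (convexOn_univ_norm (E := EuclideanSpace ℝ (Fin m))).convex_strict_epigraph
  exact convex_lightCone.linear_preimage imPart

theorem isOpen_tubeDomain : IsOpen (tubeDomain m) :=
  isOpen_lt (by fun_prop) (by fun_prop)

theorem tubeDomain_nonempty : (tubeDomain m).Nonempty := by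
  refine ⟨(Complex.I, 0), ?_⟩
  change ‖(0 : EuclideanSpace ℝ (Fin m))‖ < 1
  simp

theorem mem_tubeDomain_union_neg_iff {w : ℂ × (Fin m → ℂ)} :
    w ∈ tubeDomain m ∪ -tubeDomain m ↔ ∑ j, (w.2 j).im ^ 2 < w.1.im ^ 2 := by
  have norm_sq : ‖WithLp.toLp 2 fun j ↦ (w.2 j).im‖ ^ 2 = ∑ j, (w.2 j).im ^ 2 :=
    EuclideanSpace.real_norm_sq_eq _
  have norm_neg : ‖WithLp.toLp 2 fun j ↦ ((-w).2 j).im‖ = ‖WithLp.toLp 2 fun j ↦ (w.2 j).im‖ :=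
    norm_neg (WithLp.toLp 2 fun j ↦ (w.2 j).im)
  rw [← norm_sq, sq_lt_sq, abs_norm, lt_abs, mem_union, Set.mem_neg, tubeDomain, mem_ofPred_eq,
    mem_ofPred_eq, norm_neg, Prod.fst_neg, Complex.neg_im]

theorem continuous_tubeLift : Continuous (tubeLift (m := m)) := by
  unfold tubeLift lorentzForm
  fun_prop

theorem BC_tubeLift (w : ℂ × (Fin m → ℂ)) (y : Fin (m + 1 + 2) → ℂ) :
    BC (m + 1) (tubeLift w) y = (1 - lorentzForm w) / 2 * y 0 + w.1 * y 1
      + (1 + lorentzForm w) / 2 * y 2 - ∑ j, w.2 j * y j.succ.succ.succ := by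
  rw [BC_succ]
  change (1 - lorentzForm w) / 2 * y 0 + w.1 * y 1 - -((1 + lorentzForm w) / 2) * y 2
    - ∑ j, w.2 j * y j.succ.succ.succ = _
  rw [neg_mul, sub_neg_eq_add]

theorem BC_tubeLift_self (w : ℂ × (Fin m → ℂ)) : BC (m + 1) (tubeLift w) (tubeLift w) = 0 := by
  rw [BC_tubeLift]
  change (1 - lorentzForm w) / 2 * ((1 - lorentzForm w) / 2) + w.1 * w.1
    + (1 + lorentzForm w) / 2 * -((1 + lorentzForm w) / 2) - ∑ j, w.2 j * w.2 j = 0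
  simp only [lorentzForm, ← sq]
  ring

theorem re_BC_tubeLift_conjVec (w : ℂ × (Fin m → ℂ)) :
    (BC (m + 1) (tubeLift w) (conjVec (tubeLift w))).re
      = 2 * (w.1.im ^ 2 - ∑ j, (w.2 j).im ^ 2) := by
  have two_mul_im_sq (c : ℂ) : 2 * c.im ^ 2 = (c * starRingEnd ℂ c).re - (c ^ 2).re := by
    rw [sq c, Complex.mul_re, Complex.mul_re, Complex.conj_re, Complex.conj_im]
    ring
  rw [BC_tubeLift]
  change ((1 - lorentzForm w) / 2 * starRingEnd ℂ ((1 - lorentzForm w) / 2)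
    + w.1 * starRingEnd ℂ w.1
    + (1 + lorentzForm w) / 2 * starRingEnd ℂ (-((1 + lorentzForm w) / 2))
    - ∑ j, w.2 j * starRingEnd ℂ (w.2 j)).re = _
  have lorentzForm_re : (lorentzForm w).re = (w.1 ^ 2).re - ∑ j, (w.2 j ^ 2).re := by
    rw [lorentzForm, Complex.sub_re, Complex.re_sum]
  have outer_re (q : ℂ) : ((1 - q) / 2 * starRingEnd ℂ ((1 - q) / 2)).re
      + ((1 + q) / 2 * starRingEnd ℂ (-((1 + q) / 2))).re = -q.re := by
    simp only [map_neg, mul_neg, Complex.neg_re, Complex.mul_conj, Complex.ofReal_re,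
      Complex.normSq_apply, Complex.div_ofNat_re, Complex.div_ofNat_im, Complex.sub_re,
      Complex.sub_im, Complex.add_re, Complex.add_im, Complex.one_re, Complex.one_im]
    ring
  rw [mul_sub, Finset.mul_sum, two_mul_im_sq]
  simp only [two_mul_im_sq, Finset.sum_sub_distrib]
  rw [Complex.sub_re, Complex.add_re, Complex.add_re, Complex.re_sum]
  linear_combination outer_re (lorentzForm w) - lorentzForm_re

theorem exists_eq_smul_tubeLift {z : Fin (m + 1 + 2) → ℂ} (hz : BC (m + 1) z z = 0)
    (hz₀₂ : z 0 - z 2 ≠ 0) : ∃ w, z = (z 0 - z 2) • tubeLift w := by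
  set a := z 0 - z 2 with ha
  let w : ℂ × (Fin m → ℂ) := a⁻¹ • (z 1, fun j ↦ z j.succ.succ.succ)
  have lorentzForm_w : a * lorentzForm w = -(z 0 + z 2) := by
    simp only [lorentzForm, w, Prod.smul_fst, Prod.smul_snd, Pi.smul_apply, smul_eq_mul, mul_pow,
      ← Finset.mul_sum, ← mul_sub]
    rw [BC_succ] at hz
    simp only [← sq] at hz
    field_simp
    linear_combination hz - (z 0 + z 2) * ha
  refine ⟨w, funext (Fin.cases ?_ (Fin.cases ?_ (Fin.cases ?_ fun j ↦ ?_)))⟩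
  · change z 0 = a * ((1 - lorentzForm w) / 2)
    linear_combination lorentzForm_w / 2 - ha / 2
  · exact (mul_inv_cancel_left₀ hz₀₂ _).symm
  · change z 2 = a * -((1 + lorentzForm w) / 2)
    linear_combination lorentzForm_w / 2 + ha / 2
  · exact (mul_inv_cancel_left₀ hz₀₂ _).symm

theorem Omega_succ_eq_tubeCone :
    Omega (m + 1) = tubeCone (tubeDomain m ∪ -tubeDomain m) := by
  have mem_iff (w : ℂ × (Fin m → ℂ)) :
      tubeLift w ∈ Omega (m + 1) ↔ w ∈ tubeDomain m ∪ -tubeDomain m := by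
    simp [Omega, BC_tubeLift_self, re_BC_tubeLift_conjVec, mem_tubeDomain_union_neg_iff, -mem_union]
  ext z
  constructor
  · intro hz
    have hz₀₂ := sub_ne_zero_of_mem_Omega hz
    obtain ⟨w, hw⟩ := exists_eq_smul_tubeLift hz.1 hz₀₂
    rw [hw, smul_mem_Omega_iff hz₀₂, mem_iff] at hz
    exact ⟨_, hz₀₂, w, hz, hw.symm⟩
  · rintro ⟨a, ha, w, hw, rfl⟩
    exact (smul_mem_Omega_iff ha).2 ((mem_iff w).2 hw)

theorem tubeCone_sdiff_biUnion (V : Set (ℂ × (Fin m → ℂ))) (Δ : Set (Fin (m + 1 + 2) → ℂ)) :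
    tubeCone V \ ⋃ δ ∈ Δ, {z | BC (m + 1) z δ = 0}
      = tubeCone (V \ ⋃ δ ∈ Δ, {w | BC (m + 1) (tubeLift w) δ = 0}) := by
  have orthogonal_iff {a : ℂ} (ha : a ≠ 0) (w : ℂ × (Fin m → ℂ)) :
      a • tubeLift w ∈ ⋃ δ ∈ Δ, {z | BC (m + 1) z δ = 0}
        ↔ w ∈ ⋃ δ ∈ Δ, {w | BC (m + 1) (tubeLift w) δ = 0} := by
    simp [BC_smul_left, ha]
  ext z
  constructor
  · rintro ⟨⟨a, ha, w, hw, rfl⟩, hz⟩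
    exact ⟨a, ha, w, ⟨hw, fun h ↦ hz ((orthogonal_iff ha w).2 h)⟩, rfl⟩
  · rintro ⟨a, ha, w, ⟨hw, hwΔ⟩, rfl⟩
    exact ⟨⟨a, ha, w, hw, rfl⟩, fun h ↦ hwΔ ((orthogonal_iff ha w).1 h)⟩

theorem isConnected_tubeCone {V : Set (ℂ × (Fin m → ℂ))} (hV : IsConnected V) :
    IsConnected (tubeCone V) := by
  have isConnected_scalars : IsConnected ({0}ᶜ : Set ℂ) :=
    isConnected_compl_singleton_of_one_lt_rank (by simp) 0
  rw [tubeCone, ← image_prod]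
  exact (isConnected_scalars.prod hV).image _
    (continuous_fst.smul (continuous_tubeLift.comp continuous_snd)).continuousOn

theorem separatedNhds_tubeCone :
    SeparatedNhds (tubeCone (tubeDomain m)) (tubeCone (-tubeDomain m)) := by
  let orientation (z : Fin (m + 1 + 2) → ℂ) : ℝ := (z 1 * starRingEnd ℂ (z 0 - z 2)).im
  have orientation_cont : Continuous orientation := by fun_prop
  have orientation_smul (a : ℂ) (w : ℂ × (Fin m → ℂ)) :
      orientation (a • tubeLift w) = Complex.normSq a * w.1.im := by
    have chart_eq_one : tubeLift w 0 - tubeLift w 2 = 1 := by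
      change (1 - lorentzForm w) / 2 - -((1 + lorentzForm w) / 2) = 1
      ring
    change (a * w.1 * starRingEnd ℂ (a * tubeLift w 0 - a * tubeLift w 2)).im = _
    rw [← mul_sub, chart_eq_one, mul_one, mul_right_comm, Complex.mul_conj, Complex.im_ofReal_mul]
  have im_pos {w : ℂ × (Fin m → ℂ)} (hw : w ∈ tubeDomain m) : 0 < w.1.im :=
    (norm_nonneg _).trans_lt hw
  refine ⟨orientation ⁻¹' Ioi 0, orientation ⁻¹' Iio 0, isOpen_Ioi.preimage orientation_cont,
    isOpen_Iio.preimage orientation_cont, ?_, ?_, Ioi_disjoint_Iio_same.preimage _⟩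
  · rintro _ ⟨a, ha, w, hw, rfl⟩
    simp only [mem_preimage, mem_Ioi, orientation_smul]
    exact mul_pos (Complex.normSq_pos.2 ha) (im_pos hw)
  · rintro _ ⟨a, ha, w, hw, rfl⟩
    simp only [mem_preimage, mem_Iio, orientation_smul]
    exact mul_neg_of_pos_of_neg (Complex.normSq_pos.2 ha) (neg_pos.1 (im_pos hw))

theorem analyticOnNhd_BC_tubeLift (δ : Fin (m + 1 + 2) → ℂ) :
    AnalyticOnNhd ℂ (fun w ↦ BC (m + 1) (tubeLift w) δ) univ := by
  refine ContDiff.analyticOnNhd ?_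
  simp only [BC_tubeLift, lorentzForm]
  fun_prop

theorem exists_BC_tubeLift_ne_zero {δ : Fin (m + 1 + 2) → ℂ} (hδ : δ ≠ 0) :
    ∃ w, BC (m + 1) (tubeLift w) δ ≠ 0 := by
  contrapose! hδ
  have δ_pair (t : ℂ) (v : Fin m → ℂ) : t * δ 1 = ∑ j, v j * δ j.succ.succ.succ := by
    have pos := hδ (t, v)
    have neg := hδ (-t, -v)
    simp only [BC_tubeLift, lorentzForm, Pi.neg_apply, neg_sq, neg_mul,
      Finset.sum_neg_distrib] at pos neg
    linear_combination (pos - neg) / 2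
  have δ_one : δ 1 = 0 := by simpa using δ_pair 1 0
  have δ_succ (j : Fin m) : δ j.succ.succ.succ = 0 := by
    simpa [Pi.single_apply] using (δ_pair 0 (Pi.single j 1)).symm
  have δ_two : δ 2 = 0 := by
    simpa [BC_tubeLift, lorentzForm, δ_one] using hδ (1, 0)
  have δ_zero : δ 0 = 0 := by
    simpa [BC_tubeLift, lorentzForm, δ_two] using hδ 0
  exact funext (Fin.cases δ_zero (Fin.cases δ_one (Fin.cases δ_two δ_succ)))

theorem isConnected_tubeCone_sdiff_biUnion {V : Set (ℂ × (Fin m → ℂ))} (hV : Convex ℝ V)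
    (hVo : IsOpen V) (hVne : V.Nonempty) {Δ : Set (Fin (m + 1 + 2) → ℂ)} (hΔ : Δ.Countable)
    (hΔ₀ : 0 ∉ Δ) :
    IsConnected (tubeCone V \ ⋃ δ ∈ Δ, {z | BC (m + 1) z δ = 0}) := by
  rw [tubeCone_sdiff_biUnion]
  exact isConnected_tubeCone <| IsPathConnected.isConnected <|
    isPathConnected_sdiff_biUnion_setOf_eq_zero hV hVo hVne hΔ
      (fun δ _ ↦ analyticOnNhd_BC_tubeLift δ)
      fun δ hδ ↦ exists_BC_tubeLift_ne_zero (ne_of_mem_of_not_mem hδ hΔ₀)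

end Tube

theorem period_domain_two_components_general (n : ℕ) (hn : 1 ≤ n) (Δ : Set (Fin (n + 2) → ℂ))
    (hcount : Δ.Countable) (hΔ₀ : 0 ∉ Δ) :
    Nat.card (ConnectedComponents ↥(Omega n \ ⋃ δ ∈ Δ, {z | BC n z δ = 0})) = 2 := by
  obtain ⟨m, rfl⟩ := Nat.exists_eq_add_of_le' hn
  rw [Omega_succ_eq_tubeCone, tubeCone, image2_union_right, union_sdiff_distrib]
  exact card_connectedComponents_union_eq_two
    (isConnected_tubeCone_sdiff_biUnion convex_tubeDomain isOpen_tubeDomain tubeDomain_nonempty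
      hcount hΔ₀)
    (isConnected_tubeCone_sdiff_biUnion convex_tubeDomain.neg isOpen_tubeDomain.neg
      tubeDomain_nonempty.neg hcount hΔ₀)
    (separatedNhds_tubeCone.mono sdiff_subset sdiff_subset)

/-!
STATEMENT 10: If `Δ` is a countable set of real vectors with `B δ δ < 0` for all
`δ ∈ Δ`, then the complement in `Ω` of the complex hyperplanes orthogonal to the
vectors of `Δ` has exactly two connected components.
-/
theorem period_domain_two_components (n : ℕ) (hn : 1 ≤ n)
    (Δ : Set (Fin (n + 2) → ℝ)) (hcount : Δ.Countable)
    (hneg : ∀ δ ∈ Δ, BR n δ δ < 0) :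
    Nat.card (ConnectedComponents
      ↥(Omega n \ ⋃ δ ∈ Δ, {z | BC n z (fun i => (δ i : ℂ)) = 0})) = 2 := by
  have card_eq_two := period_domain_two_components_general n hn _
    (hcount.image fun δ i ↦ (δ i : ℂ))
    fun ⟨δ, hδ, hδ₀⟩ ↦ ofReal_ne_zero_of_BR_self_neg (hneg δ hδ) hδ₀
  rwa [biUnion_image] at card_eq_two
end
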